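/- Let ν be a T-invariant Borel probability measure on X that is a weak Gibbs measure for φ ∈ C(X). Then −∫ φ dν ≤ h(T,ν), where h(T,ν) is the Kolmogorov–Sinai entropy of ν. -/

import Mathlib

open MeasureTheory Filter Topology Set
open scoped ENNReal NNReal

variable {X : Type*} [MetricSpace X] [CompactSpace X] [Nonempty X]
  [MeasurableSpace X] [BorelSpace X]

/-- The dynamical (Bowen) ball `B_m(x, ε)`. -/
def dynBall (T : X → X) (m : ℕ) (x : X) (ε : ℝ) : Set X :=
  {y | ∀ k < m, dist (T^[k] x) (T^[k] y) ≤ ε}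

/-- `∫ φ dE_m(x)`, the integral of `φ` against the empirical measure,
i.e. the Birkhoff average `(1/m) ∑_{k<m} φ(T^k x)`. -/
noncomputable def birkhoffAvg (T : X → X) (φ : X → ℝ) (m : ℕ) (x : X) : ℝ :=
  (∑ k ∈ Finset.range m, φ (T^[k] x)) / m

/-- `ν` is a weak Gibbs measure for `φ`. -/
def IsWeakGibbs (T : X → X) (ν : Measure X) (φ : X → ℝ) : Prop :=
  ∀ δ : ℝ, 0 < δ → ∃ εδ : ℝ, 0 < εδ ∧ ∀ ε : ℝ, 0 < ε → ε ≤ εδ →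
    ∃ N : ℕ, ∀ m ≥ N, ∀ x : X,
      -δ ≤ Real.log (ν (dynBall T m x ε)).toReal / m - birkhoffAvg T φ m x ∧
        Real.log (ν (dynBall T m x ε)).toReal / m - birkhoffAvg T φ m x ≤ δ

/-- The empirical measure `E_m(x) = (1/m) ∑_{k<m} δ_{T^k x}` as a Borel
probability measure (junk value `δ_x` for `m = 0`). -/
noncomputable def empMeasure (T : X → X) (m : ℕ) (x : X) : ProbabilityMeasure X :=
  if h : m = 0 then ⟨Measure.dirac x, inferInstance⟩
  else
    ⟨(m : ℝ≥0∞)⁻¹ • ∑ k ∈ Finset.range m, Measure.dirac (T^[k] x), by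
      constructor
      simp only [Measure.smul_apply, Measure.coe_finset_sum, Finset.sum_apply,
        measure_univ, Finset.sum_const, Finset.card_range, nsmul_eq_mul, mul_one, smul_eq_mul]
      exact ENNReal.inv_mul_cancel (by exact_mod_cast h) (ENNReal.natCast_ne_top m)⟩

/-- The entropy of `ν` relative to the finite measurable partition given by the
fibers of `P : X → Fin p`, defined (following Fekete's lemma) as
`inf_n H(P ∨ T⁻¹P ∨ ⋯ ∨ T^{-n+1}P)/n`. -/
noncomputable def partEntropy (T : X → X) (ν : Measure X) {p : ℕ} (P : X → Fin p) : ℝ :=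
  ⨅ n : ℕ, (∑ s : Fin (n + 1) → Fin p,
    Real.negMulLog ((ν {y | ∀ k : Fin (n + 1), P (T^[(k : ℕ)] y) = s k}).toReal)) / (n + 1)

/-- The Kolmogorov–Sinai (metric) entropy `h(T, ν)`: the supremum of the
partition entropies over all finite measurable partitions. -/
noncomputable def metricEntropy (T : X → X) (ν : Measure X) : ℝ :=
  ⨆ p : ℕ, ⨆ P : {P : X → Fin p // ∀ i, MeasurableSet (P ⁻¹' {i})}, partEntropy T ν P.1


/-- Entropy of a finite-valued random variable. -/
noncomputable def rvEnt {Ω S : Type*} [MeasurableSpace Ω] [Fintype S]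
    (ν : Measure Ω) (σ : Ω → S) : ℝ :=
  ∑ s : S, Real.negMulLog (ν.real (σ ⁻¹' {s}))

set_option linter.unusedSectionVars false

section generic
variable {Ω S : Type*} [MeasurableSpace Ω] [Fintype S] [MeasurableSpace S]
  [MeasurableSingletonClass S]

lemma rv_integrable (ν : Measure Ω) [IsProbabilityMeasure ν] (σ : Ω → S) (hσ : Measurable σ)
    (c : S → ℝ) : Integrable (fun y => c (σ y)) ν := by
  have h1 : Integrable c (ν.map σ) := by
    have := Measure.isProbabilityMeasure_map (μ := ν) hσ.aemeasurable
    exact Integrable.of_finite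
  exact h1.comp_measurable hσ

lemma rv_integral (ν : Measure Ω) [IsProbabilityMeasure ν] (σ : Ω → S) (hσ : Measurable σ)
    (c : S → ℝ) : ∫ y, c (σ y) ∂ν = ∑ s, ν.real (σ ⁻¹' {s}) * c s := by
  have := Measure.isProbabilityMeasure_map (μ := ν) hσ.aemeasurable
  have h1 : Integrable c (ν.map σ) := Integrable.of_finite
  rw [← integral_map hσ.aemeasurable h1.aestronglyMeasurable, integral_fintype h1]
  refine Finset.sum_congr rfl fun s _ => ?_
  rw [map_measureReal_apply hσ (measurableSet_singleton s), smul_eq_mul]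

lemma rvEnt_eq (ν : Measure Ω) [IsProbabilityMeasure ν] (σ : Ω → S) (hσ : Measurable σ) :
    rvEnt ν σ = ∫ y, - Real.log (ν.real (σ ⁻¹' {σ y})) ∂ν := by
  rw [rv_integral ν σ hσ (fun s => - Real.log (ν.real (σ ⁻¹' {s})))]
  refine Finset.sum_congr rfl fun s _ => ?_
  rw [Real.negMulLog]; ring

lemma rv_sum_one (ν : Measure Ω) [IsProbabilityMeasure ν] (σ : Ω → S) (hσ : Measurable σ) :
    ∑ s, ν.real (σ ⁻¹' {s}) = 1 := by
  have := rv_integral ν σ hσ (fun _ => 1)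
  simpa using this.symm

lemma rv_ae_pos (ν : Measure Ω) [IsProbabilityMeasure ν] (σ : Ω → S) :
    ∀ᵐ y ∂ν, 0 < ν.real (σ ⁻¹' {σ y}) := by
  have h : ∀ᵐ y ∂ν, ∀ s, ν.real (σ ⁻¹' {s}) = 0 → σ y ≠ s := by
    rw [ae_all_iff]
    intro s
    by_cases hs : ν.real (σ ⁻¹' {s}) = 0
    · have h0 : ν (σ ⁻¹' {s}) = 0 := by
        rwa [measureReal_eq_zero_iff] at hs
      filter_upwards [measure_eq_zero_iff_ae_notMem.1 h0] with y hy _ h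
      exact hy h
    · exact Filter.Eventually.of_forall fun y h => absurd h hs
  filter_upwards [h] with y hy
  exact lt_of_le_of_ne measureReal_nonneg fun h0 => hy _ h0.symm rfl

lemma rvEnt_nonneg (ν : Measure Ω) [IsProbabilityMeasure ν] (σ : Ω → S) : 0 ≤ rvEnt ν σ :=
  Finset.sum_nonneg fun _ _ => Real.negMulLog_nonneg measureReal_nonneg measureReal_le_one

/-- Gibbs inequality. -/
lemma rvEnt_le (ν : Measure Ω) [IsProbabilityMeasure ν] (σ : Ω → S) (hσ : Measurable σ)
    (q : S → ℝ) (hq0 : ∀ s, 0 ≤ q s) (hq : ∀ s, 0 < ν.real (σ ⁻¹' {s}) → 0 < q s)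
    (hq1 : ∑ s, q s ≤ 1) : rvEnt ν σ ≤ ∫ y, - Real.log (q (σ y)) ∂ν := by
  rw [rv_integral ν σ hσ (fun s => - Real.log (q s))]
  have key : ∀ s, Real.negMulLog (ν.real (σ ⁻¹' {s})) ≤
      ν.real (σ ⁻¹' {s}) * - Real.log (q s) + (q s - ν.real (σ ⁻¹' {s})) := by
    intro s
    rcases (measureReal_nonneg : 0 ≤ ν.real (σ ⁻¹' {s})).eq_or_lt with h | h
    · rw [← h]; simpa using hq0 s
    · have h1 := hq s h
      have h2 := Real.log_le_sub_one_of_pos (div_pos h1 h)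
      rw [Real.log_div h1.ne' h.ne'] at h2
      have h3 := mul_le_mul_of_nonneg_left h2 h.le
      rw [mul_sub _ (q s / _), mul_div_cancel₀ _ h.ne'] at h3
      rw [Real.negMulLog]
      linarith
  have := Finset.sum_le_sum fun s (_ : s ∈ Finset.univ) => key s
  rw [Finset.sum_add_distrib, Finset.sum_sub_distrib, rv_sum_one ν σ hσ] at this
  rw [rvEnt]
  linarith

end generic

section words
variable {Ω : Type*} [MeasurableSpace Ω]

/-- Itinerary of length `n`. -/
def itin (T : Ω → Ω) {p : ℕ} (P : Ω → Fin p) (n : ℕ) (y : Ω) : Fin n → Fin p :=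
  fun k => P (T^[(k : ℕ)] y)

lemma itin_meas (T : Ω → Ω) (hT : Measurable T) {p : ℕ} (P : Ω → Fin p) (hP : Measurable P)
    (n : ℕ) : Measurable (itin T P n) :=
  measurable_pi_lambda _ fun k => hP.comp (hT.iterate k)

lemma itin_subadd (ν : Measure Ω) [IsProbabilityMeasure ν] (T : Ω → Ω)
    (hT : MeasurePreserving T ν ν) {p : ℕ} (P : Ω → Fin p) (hP : Measurable P) (a b : ℕ) :
    rvEnt ν (itin T P (a + b)) ≤ rvEnt ν (itin T P a) + rvEnt ν (itin T P b) := by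
  have hm := itin_meas T hT.measurable P hP
  have hTa := hT.iterate a
  have e1 : ∀ y, (fun i => itin T P (a + b) y (Fin.castAdd b i)) = itin T P a y := fun y => rfl
  have e2 : ∀ y, (fun i => itin T P (a + b) y (Fin.natAdd a i)) = itin T P b (T^[a] y) := by
    intro y; funext i
    simp only [itin, Fin.val_natAdd]
    rw [add_comm, Function.iterate_add_apply]
  set f : (Fin a → Fin p) → ℝ := fun s => ν.real (itin T P a ⁻¹' {s}) with hf
  set g : (Fin b → Fin p) → ℝ := fun s => ν.real (itin T P b ⁻¹' {s}) with hg
  have hga : ∀ s, g s = ν.real ((fun y => itin T P b (T^[a] y)) ⁻¹' {s}) := by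
    intro s
    have := hTa.measureReal_preimage ((hm b) (measurableSet_singleton s)).nullMeasurableSet
    exact this.symm
  set q : (Fin (a + b) → Fin p) → ℝ := fun s =>
    f (fun i => s (Fin.castAdd b i)) * g (fun i => s (Fin.natAdd a i)) with hqd
  have hle := rvEnt_le ν (itin T P (a + b)) (hm (a + b)) q
    (fun s => mul_nonneg measureReal_nonneg measureReal_nonneg) ?_ ?_
  · refine hle.trans (le_of_eq ?_)
    have h1 := rv_ae_pos ν (itin T P a)
    have h2 : ∀ᵐ y ∂ν, 0 < g (itin T P b (T^[a] y)) := by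
      have := rv_ae_pos ν (fun y => itin T P b (T^[a] y))
      filter_upwards [this] with y hy
      rw [hga]; exact hy
    have h3 : ∫ y, - Real.log (q (itin T P (a + b) y)) ∂ν =
        ∫ y, (- Real.log (f (itin T P a y)) + - Real.log (g (itin T P b (T^[a] y)))) ∂ν := by
      refine integral_congr_ae ?_
      filter_upwards [h1, h2] with y hy1 hy2
      simp only [hqd]
      rw [e1, e2, Real.log_mul hy1.ne' hy2.ne']
      ring
    rw [h3, integral_add (rv_integrable ν _ (hm a) fun s => - Real.log (f s))
      (rv_integrable ν (fun y => itin T P b (T^[a] y)) ((hm b).comp hTa.measurable)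
        fun s => - Real.log (g s)),
      rvEnt_eq ν _ (hm a), rvEnt_eq ν _ (hm b)]
    congr 1
    have h4 := (rv_integrable ν _ (hm b) fun s => - Real.log (g s)).aestronglyMeasurable
    rw [← hTa.map_eq] at h4
    have := integral_map hTa.measurable.aemeasurable h4
    rw [hTa.map_eq] at this
    exact this.symm
  · intro s hs
    refine mul_pos ?_ ?_
    · refine hs.trans_le (measureReal_mono ?_)
      rintro y rfl
      exact (e1 y).symm
    · rw [hga]
      refine hs.trans_le (measureReal_mono ?_)
      rintro y rfl
      exact (e2 y).symm
  · rw [← (Fin.appendEquiv a b).sum_comp, Fintype.sum_prod_type]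
    have : ∀ x y, q (Fin.appendEquiv a b (x, y)) = f x * g y := by
      intro x y
      simp [hqd, Fin.appendEquiv]
    simp_rw [this, ← Finset.mul_sum]
    rw [← Finset.sum_mul, rv_sum_one ν _ (hm a), rv_sum_one ν _ (hm b)]
    norm_num

lemma partEnt_ge (ν : Measure Ω) [IsProbabilityMeasure ν] (T : Ω → Ω)
    (hT : MeasurePreserving T ν ν) {p : ℕ} (P : Ω → Fin p) (hP : Measurable P) (c : ℝ) (N : ℕ)
    (h : ∀ n ≥ N, 0 < n → n * c ≤ rvEnt ν (itin T P n)) (n : ℕ) :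
    c ≤ rvEnt ν (itin T P (n + 1)) / (n + 1) := by
  have hs : Subadditive fun n => rvEnt ν (itin T P n) := itin_subadd ν T hT P hP
  have hb : BddBelow (range fun n : ℕ => rvEnt ν (itin T P n) / n) :=
    ⟨0, by rintro _ ⟨n, rfl⟩; exact div_nonneg (rvEnt_nonneg _ _) n.cast_nonneg⟩
  have h1 := hs.lim_le_div hb (Nat.succ_ne_zero n)
  push_cast at h1
  refine le_trans ?_ h1
  refine ge_of_tendsto (hs.tendsto_lim hb) ?_
  filter_upwards [eventually_ge_atTop N, eventually_gt_atTop 0] with m hm hm0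
  rw [le_div_iff₀ (by exact_mod_cast hm0), mul_comm]
  exact h m hm hm0

end words

section dyn
variable {Y : Type*} [MetricSpace Y] [CompactSpace Y] [Nonempty Y]
  [MeasurableSpace Y] [BorelSpace Y]

lemma partEntropy_eq (T : Y → Y) (ν : Measure Y) {p : ℕ} (P : Y → Fin p) :
    partEntropy T ν P = ⨅ n : ℕ, rvEnt ν (itin T P (n + 1)) / (n + 1) := by
  have : ∀ (n : ℕ) (s : Fin (n + 1) → Fin p),
      {y | ∀ k : Fin (n + 1), P (T^[(k : ℕ)] y) = s k} = itin T P (n + 1) ⁻¹' {s} := by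
    intro n s; ext y
    simp [itin, funext_iff]
  simp only [partEntropy, this]
  rfl

lemma partEntropy_le (T : Y → Y) (ν : Measure Y) [IsProbabilityMeasure ν] {p : ℕ}
    (P : Y → Fin p) (n : ℕ) :
    partEntropy T ν P ≤ rvEnt ν (itin T P (n + 1)) / (n + 1) := by
  rw [partEntropy_eq]
  refine ciInf_le ⟨0, ?_⟩ n
  rintro _ ⟨n, rfl⟩
  exact div_nonneg (rvEnt_nonneg _ _) (by positivity)

lemma exists_small_partition (ε : ℝ) (hε : 0 < ε) :
    ∃ (p : ℕ) (P : Y → Fin p), Measurable P ∧ ∀ x y, P x = P y → dist x y ≤ ε := by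
  set e := TopologicalSpace.denseSeq Y
  obtain ⟨t, ht⟩ := isCompact_univ.elim_finite_subcover (fun n : ℕ => Metric.ball (e n) (ε / 2))
    (fun _ => Metric.isOpen_ball) (by
      intro y _
      obtain ⟨n, hn⟩ := (TopologicalSpace.denseRange_denseSeq Y).exists_dist_lt y (half_pos hε)
      exact mem_iUnion.2 ⟨n, hn⟩)
  set N := t.sup id
  have hlt : ∀ x, SimpleFunc.nearestPtInd e N x < N + 1 := fun x =>
    Nat.lt_succ_of_le (SimpleFunc.nearestPtInd_le e N x)
  refine ⟨N + 1, fun y => Fin.ofNat (N + 1) (SimpleFunc.nearestPtInd e N y), ?_, ?_⟩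
  · exact (measurable_from_nat (f := Fin.ofNat (N + 1))).comp
      (SimpleFunc.nearestPtInd e N).measurable
  · have hd : ∀ x, dist (e (SimpleFunc.nearestPtInd e N x)) x ≤ ε / 2 := by
      intro x
      have := ht (mem_univ x)
      simp only [mem_iUnion] at this
      obtain ⟨k, hk, hx⟩ := this
      have h1 := SimpleFunc.edist_nearestPt_le e x (show k ≤ N from Finset.le_sup (f := id) hk)
      rw [edist_dist, edist_dist, ENNReal.ofReal_le_ofReal_iff dist_nonneg] at h1
      rw [Metric.mem_ball, dist_comm] at hx
      exact h1.trans hx.le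
    intro x y hxy
    have h2 : SimpleFunc.nearestPtInd e N x = SimpleFunc.nearestPtInd e N y := by
      have := congrArg Fin.val hxy
      simpa [Fin.ofNat, Nat.mod_eq_of_lt (hlt _)] using this
    have h3 := hd x
    have h4 := hd y
    rw [h2] at h3
    have := dist_triangle_left x y (e (SimpleFunc.nearestPtInd e N y))
    linarith

lemma integral_sum_iterate (T : Y → Y) (ν : Measure Y) [IsProbabilityMeasure ν]
    (hT : MeasurePreserving T ν ν) (f : Y → ℝ) (hf : Integrable f ν) (n : ℕ) :
    Integrable (fun y => ∑ k ∈ Finset.range n, f (T^[k] y)) ν ∧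
    ∫ y, ∑ k ∈ Finset.range n, f (T^[k] y) ∂ν = n * ∫ y, f y ∂ν := by
  have h1 : ∀ k, Integrable (fun y => f (T^[k] y)) ν := fun k =>
    (hT.iterate k).integrable_comp_of_integrable hf
  have h2 : ∀ k, ∫ y, f (T^[k] y) ∂ν = ∫ y, f y ∂ν := by
    intro k
    have hk := hT.iterate k
    have h4 := hf.aestronglyMeasurable
    rw [← hk.map_eq] at h4
    have := integral_map hk.measurable.aemeasurable h4
    rw [hk.map_eq] at this
    exact this.symm
  refine ⟨integrable_finsetSum _ fun k _ => h1 k, ?_⟩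
  rw [integral_finsetSum _ fun k _ => h1 k]
  simp [h2]

/-- The lower bound. -/
lemma lower_bound (T : Y → Y) (hT : Continuous T) (φ : Y → ℝ) (hφ : Continuous φ)
    (ν : Measure Y) [IsProbabilityMeasure ν] (hinv : MeasurePreserving T ν ν)
    (hν : IsWeakGibbs T ν φ) (δ : ℝ) (hδ : 0 < δ) :
    ∃ (p : ℕ) (P : Y → Fin p), Measurable P ∧ - ∫ x, φ x ∂ν - δ ≤ partEntropy T ν P := by
  obtain ⟨ε, hε, hG⟩ := hν δ hδ
  obtain ⟨N, hN⟩ := hG ε hε le_rfl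
  obtain ⟨p, P, hP, hPd⟩ := exists_small_partition (Y := Y) ε hε
  refine ⟨p, P, hP, ?_⟩
  rw [partEntropy_eq]
  refine le_ciInf fun n => partEnt_ge ν T hinv P hP _ N ?_ n
  intro m hm hm0
  have hm0' : (0 : ℝ) < m := by exact_mod_cast hm0
  have hφi : Integrable φ ν := hφ.integrable_of_hasCompactSupport (HasCompactSupport.of_compactSpace φ)
  obtain ⟨i1, i2⟩ := integral_sum_iterate T ν hinv φ hφi m
  have hmm := itin_meas T hT.measurable P hP m
  rw [rvEnt_eq ν _ hmm]
  have : (m : ℝ) * (- ∫ x, φ x ∂ν - δ) =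
      ∫ y, (- (∑ k ∈ Finset.range m, φ (T^[k] y)) - m * δ) ∂ν := by
    rw [integral_sub (f := fun y => - ∑ k ∈ Finset.range m, φ (T^[k] y)) i1.neg
      (integrable_const _), integral_neg, i2]
    simp; ring
  rw [this]
  refine integral_mono_ae (i1.neg.sub (integrable_const _))
    (rv_integrable ν _ hmm fun s => - Real.log (ν.real (itin T P m ⁻¹' {s}))) ?_
  filter_upwards [rv_ae_pos ν (itin T P m)] with y hy
  have hsub : itin T P m ⁻¹' {itin T P m y} ⊆ dynBall T m y ε := by
    intro z hz k hk
    have := congrFun hz ⟨k, hk⟩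
    exact hPd _ _ this.symm
  have h1 := Real.log_le_log hy (measureReal_mono hsub (μ := ν))
  have h2 := (hN m hm y).2
  rw [birkhoffAvg, ← sub_div, div_le_iff₀ hm0'] at h2
  change Real.log (ν.real (dynBall T m y ε)) - _ ≤ _ at h2
  linarith

lemma dynBall_nhds (T : Y → Y) (hT : Continuous T) (m : ℕ) (y : Y) (ε : ℝ) (hε : 0 < ε) :
    dynBall T m y ε ∈ 𝓝 y := by
  have : ∀ᶠ z in 𝓝 y, ∀ k ∈ Finset.range m, dist (T^[k] y) (T^[k] z) ≤ ε := by
    rw [Filter.eventually_all_finset]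
    intro k _
    have hc : Continuous fun z => dist (T^[k] y) (T^[k] z) :=
      continuous_const.dist (hT.iterate k)
    have := (hc.tendsto y).eventually (Iio_mem_nhds (by simpa using hε : _ < ε))
    exact this.mono fun z hz => le_of_lt hz
  filter_upwards [this] with z hz k hk
  exact hz k (Finset.mem_range.2 hk)

lemma exists_compacts (ν : Measure Y) [IsProbabilityMeasure ν] {p : ℕ} (P : Y → Fin p)
    (hP : Measurable P) (η : ℝ) (hη : 0 < η) :
    ∃ (K : Fin p → Set Y) (ε : ℝ), 0 < ε ∧ (∀ i, IsClosed (K i)) ∧ (∀ i, K i ⊆ P ⁻¹' {i}) ∧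
      (∀ i j, i ≠ j → Disjoint (Metric.cthickening ε (K i)) (Metric.cthickening ε (K j))) ∧
      ν.real (⋃ i, K i)ᶜ ≤ p * η := by
  have h1 : ∀ i : Fin p, ∃ K ⊆ P ⁻¹' {i}, IsClosed K ∧ ν (P ⁻¹' {i} \ K) < ENNReal.ofReal η :=
    fun i => (hP (measurableSet_singleton i)).exists_isClosed_sdiff_lt (measure_ne_top _ _)
      (by simpa using hη)
  choose K hKs hKc hKm using h1
  have h2 : ∀ᶠ ε in 𝓝[>] (0 : ℝ), ∀ i j, i ≠ j →
      Disjoint (Metric.cthickening ε (K i)) (Metric.cthickening ε (K j)) := by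
    rw [Filter.eventually_all]; intro i
    rw [Filter.eventually_all]; intro j
    by_cases hij : i = j
    · exact Filter.Eventually.of_forall fun _ h => absurd hij h
    have hd : Disjoint (K i) (K j) := by
      rw [Set.disjoint_left]
      intro x hi hj
      exact hij ((hKs i hi).symm.trans (hKs j hj))
    obtain ⟨δ, hδ, hdis⟩ := hd.exists_cthickenings (hKc i).isCompact (hKc j)
    filter_upwards [Ioo_mem_nhdsGT hδ] with ε hε _
    exact hdis.mono (Metric.cthickening_mono hε.2.le _) (Metric.cthickening_mono hε.2.le _)
  obtain ⟨ε, h3, h4⟩ := (h2.and self_mem_nhdsWithin).exists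
  refine ⟨K, ε, h4, hKc, hKs, h3, ?_⟩
  have hsub : (⋃ i, K i)ᶜ ⊆ ⋃ i, (P ⁻¹' {i} \ K i) := by
    intro y hy
    simp only [mem_compl_iff, mem_iUnion, not_exists] at hy
    exact mem_iUnion.2 ⟨P y, rfl, hy _⟩
  calc ν.real (⋃ i, K i)ᶜ ≤ ν.real (⋃ i, (P ⁻¹' {i} \ K i)) := measureReal_mono hsub
    _ ≤ ∑ i, ν.real (P ⁻¹' {i} \ K i) := measureReal_iUnion_fintype_le _
    _ ≤ ∑ i : Fin p, η := by
      refine Finset.sum_le_sum fun i _ => ?_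
      exact ENNReal.toReal_le_of_le_ofReal hη.le (hKm i).le
    _ = p * η := by simp

/-- The upper bound: entropies are uniformly bounded. -/
lemma upper_bound (T : Y → Y) (hT : Continuous T) (φ : Y → ℝ)
    (ν : Measure Y) [IsProbabilityMeasure ν] (hinv : MeasurePreserving T ν ν)
    (hν : IsWeakGibbs T ν φ) (M : ℝ) (hM : ∀ x, |φ x| ≤ M) {p : ℕ} (P : Y → Fin p)
    (hP : Measurable P) : partEntropy T ν P ≤ M + 1 + Real.log 2 + 1 := by
  have hp : 0 < p := (P (Classical.arbitrary Y)).pos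
  have hp' : (0 : ℝ) < p := by exact_mod_cast hp
  have hp1 : (1 : ℝ) ≤ p := by exact_mod_cast hp
  obtain ⟨K, ε₀, hε₀, hKc, hKs, hKd, hKm⟩ := exists_compacts ν P hP (1 / (p : ℝ) ^ 2) (by positivity)
  obtain ⟨ε₁, hε₁, hG⟩ := hν 1 one_pos
  set ε := min ε₀ ε₁ with hεd
  have hε : 0 < ε := lt_min hε₀ hε₁
  obtain ⟨N, hN⟩ := hG ε hε (min_le_right _ _)
  set n := N + 1 with hn
  have hn0 : (0 : ℝ) < n := by rw [hn]; positivity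
  have hp_le := partEntropy_le T ν P N
  refine hp_le.trans ?_
  rw [div_le_iff₀ (by positivity)]
  -- weights
  set w : Y → Fin p → ℝ := fun z j =>
    1 / (2 * p) + (Metric.cthickening ε (K j)).indicator (fun _ => (1 / 2 : ℝ)) z with hw
  have hw0 : ∀ z j, 0 < w z j := fun z j =>
    add_pos_of_pos_of_nonneg (by positivity) (indicator_nonneg (fun _ _ => by norm_num) _)
  have hwm : ∀ j, Measurable fun z => w z j := fun j =>
    measurable_const.add (measurable_const.indicator Metric.isClosed_cthickening.measurableSet)
  have hw1 : ∀ z, ∑ j, w z j ≤ 1 := by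
    intro z
    have hind : ∑ j, (Metric.cthickening ε (K j)).indicator (fun _ => (1 / 2 : ℝ)) z ≤ 1 / 2 := by
      by_cases hz : ∃ j, z ∈ Metric.cthickening ε (K j)
      · obtain ⟨j, hj⟩ := hz
        rw [Finset.sum_eq_single j]
        · rw [indicator_of_mem hj]
        · intro i _ hij
          refine indicator_of_notMem (fun hi => ?_) _
          exact Set.disjoint_left.1 (hKd i j hij)
            (Metric.cthickening_mono (min_le_left _ _) _ hi)
            (Metric.cthickening_mono (min_le_left _ _) _ hj)
        · simp
      · push Not at hz
        rw [Finset.sum_eq_zero fun j _ => indicator_of_notMem (hz j) _]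
        norm_num
    simp only [hw, Finset.sum_add_distrib]
    have : ∑ j : Fin p, 1 / (2 * (p : ℝ)) = 1 / 2 := by
      simp; field_simp
    linarith
  have hwle : ∀ z j, w z j ≤ 1 := fun z j =>
    (Finset.single_le_sum (fun i _ => (hw0 z i).le) (Finset.mem_univ j)).trans (hw1 z)
  set W : (Fin n → Fin p) → Y → ℝ := fun s x => ∏ k : Fin n, w (T^[(k : ℕ)] x) (s k) with hW
  have hW0 : ∀ s x, 0 ≤ W s x := fun s x => Finset.prod_nonneg fun k _ => (hw0 _ _).le
  have hWi : ∀ s, Integrable (W s) ν := by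
    intro s
    refine Integrable.of_bound (C := 1) ?_ (Filter.Eventually.of_forall fun x => ?_)
    · refine Measurable.aestronglyMeasurable ?_
      exact Finset.measurable_prod _ fun k _ => (hwm (s k)).comp (hT.iterate k).measurable
    · rw [Real.norm_of_nonneg (hW0 s x)]
      exact Finset.prod_le_one (fun k _ => (hw0 _ _).le) fun k _ => hwle _ _
  set q : (Fin n → Fin p) → ℝ := fun s => ∫ x, W s x ∂ν with hq
  have hq0 : ∀ s, 0 ≤ q s := fun s => integral_nonneg (hW0 s)
  have hq1 : ∑ s, q s ≤ 1 := by
    rw [hq, ← integral_finsetSum _ fun s _ => hWi s]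
    have : ∀ x, ∑ s, W s x ≤ 1 := by
      intro x
      simp only [hW]
      rw [← Fintype.prod_sum (fun (k : Fin n) j => w (T^[(k : ℕ)] x) j)]
      exact Finset.prod_le_one (fun k _ => Finset.sum_nonneg fun j _ => (hw0 _ _).le)
        fun k _ => hw1 _
    calc _ ≤ ∫ x, (1 : ℝ) ∂ν := integral_mono (integrable_finsetSum _ fun s _ => hWi s)
          (integrable_const _) this
      _ = 1 := by simp
  -- error term
  set U : Set Y := (⋃ i, K i)ᶜ with hU
  have hUm : MeasurableSet U := (MeasurableSet.iUnion fun i => (hKc i).measurableSet).compl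
  set r : Y → ℝ := fun z => Real.log 2 + U.indicator (fun _ => Real.log p) z with hr
  have hri : Integrable r ν :=
    (integrable_const _).add ((integrable_const _).indicator hUm)
  have hrint : ∫ z, r z ∂ν ≤ Real.log 2 + 1 := by
    rw [hr, integral_add (integrable_const _) ((integrable_const _).indicator hUm),
      integral_indicator_const _ hUm]
    simp only [integral_const, probReal_univ, smul_eq_mul, one_mul]
    have h1 : Real.log p ≤ p := (Real.log_le_sub_one_of_pos hp').trans (by linarith)
    have h2 : ν.real U * Real.log p ≤ (p * (1 / (p : ℝ) ^ 2)) * p :=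
      mul_le_mul hKm h1 (Real.log_nonneg hp1) (by positivity)
    have h3 : (p * (1 / (p : ℝ) ^ 2)) * p = 1 := by field_simp
    linarith
  have hgw : ∀ x y, dist y x ≤ ε → Real.exp (- r y) ≤ w x (P y) := by
    intro x y hxy
    by_cases hy : y ∈ U
    · simp only [hr, hw, indicator_of_mem hy]
      have : Real.exp (-(Real.log 2 + Real.log p)) = 1 / (2 * p) := by
        rw [Real.exp_neg, Real.exp_add, Real.exp_log two_pos, Real.exp_log hp', one_div]
      rw [this]
      have := indicator_nonneg (s := Metric.cthickening ε (K (P y)))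
        (f := fun _ => (1 / 2 : ℝ)) (fun _ _ => by norm_num) x
      linarith
    · simp only [hr, hw, indicator_of_notMem hy]
      have hyK : y ∈ K (P y) := by
        rw [hU, notMem_compl_iff, mem_iUnion] at hy
        obtain ⟨i, hi⟩ := hy
        have : P y = i := hKs i hi
        rwa [this]
      have hx : x ∈ Metric.cthickening ε (K (P y)) :=
        Metric.mem_cthickening_of_dist_le x y ε _ hyK (by rwa [dist_comm])
      rw [indicator_of_mem hx, add_zero, Real.exp_neg, Real.exp_log two_pos]
      have : 0 < 1 / (2 * (p : ℝ)) := by positivity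
      linarith
  have hlow : ∀ y, 0 < ν (dynBall T n y ε) →
      Real.exp (-(n * (M + 1) + ∑ k ∈ Finset.range n, r (T^[k] y))) ≤ q (itin T P n y) := by
    intro y hy
    have hy' : 0 < ν.real (dynBall T n y ε) := ENNReal.toReal_pos hy.ne' (measure_ne_top _ _)
    have hBm : MeasurableSet (dynBall T n y ε) := by
      have : dynBall T n y ε = ⋂ k, ⋂ (_ : k < n), {z | dist (T^[k] y) (T^[k] z) ≤ ε} := by
        ext z; simp [dynBall]
      rw [this]
      refine MeasurableSet.iInter fun k => MeasurableSet.iInter fun _ => ?_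
      exact (isClosed_le (continuous_const.dist (hT.iterate k)) continuous_const).measurableSet
    have hB : Real.exp (-(n * (M + 1))) ≤ ν.real (dynBall T n y ε) := by
      rw [← Real.le_log_iff_exp_le hy']
      have h2 := (hN n (by omega) y).1
      rw [birkhoffAvg, ← sub_div, le_div_iff₀ hn0] at h2
      change _ ≤ Real.log (ν.real (dynBall T n y ε)) - _ at h2
      have h3 : ∑ k ∈ Finset.range n, (-M) ≤ ∑ k ∈ Finset.range n, φ (T^[k] y) :=
        Finset.sum_le_sum fun k _ => (abs_le.1 (hM _)).1
      simp only [Finset.sum_const, Finset.card_range, nsmul_eq_mul] at h3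
      linarith
    have hpt : ∀ x ∈ dynBall T n y ε,
        Real.exp (-(∑ k ∈ Finset.range n, r (T^[k] y))) ≤ W (itin T P n y) x := by
      intro x hx
      rw [← Finset.sum_neg_distrib, Real.exp_sum, Finset.prod_range]
      exact Finset.prod_le_prod (fun k _ => (Real.exp_pos _).le) fun k _ =>
        hgw _ _ (hx k k.2)
    calc Real.exp (-(n * (M + 1) + ∑ k ∈ Finset.range n, r (T^[k] y)))
        = Real.exp (-(n * (M + 1))) * Real.exp (-(∑ k ∈ Finset.range n, r (T^[k] y))) := by
          rw [← Real.exp_add]; ring_nf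
      _ ≤ ν.real (dynBall T n y ε) * Real.exp (-(∑ k ∈ Finset.range n, r (T^[k] y))) := by
          gcongr
      _ = ∫ x in dynBall T n y ε, Real.exp (-(∑ k ∈ Finset.range n, r (T^[k] y))) ∂ν := by
          simp
      _ ≤ ∫ x in dynBall T n y ε, W (itin T P n y) x ∂ν :=
          setIntegral_mono_on (integrable_const _).integrableOn (hWi _).integrableOn hBm hpt
      _ ≤ q (itin T P n y) :=
          setIntegral_le_integral (hWi _) (Filter.Eventually.of_forall (hW0 _))
  have hqpos : ∀ s, 0 < q s := by
    intro s
    have hc : ∀ x, (1 / (2 * p) : ℝ) ^ n ≤ W s x := by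
      intro x
      have : ∏ k : Fin n, (1 / (2 * p) : ℝ) ≤ W s x :=
        Finset.prod_le_prod (fun _ _ => by positivity) fun k _ =>
          le_add_of_nonneg_right (indicator_nonneg (fun _ _ => by norm_num) _)
      simpa using this
    have := integral_mono (μ := ν) (integrable_const _) (hWi s) hc
    simp only [integral_const, probReal_univ, smul_eq_mul, one_mul] at this
    exact lt_of_lt_of_le (by positivity) this
  have hmm := itin_meas T hT.measurable P hP n
  obtain ⟨i1, i2⟩ := integral_sum_iterate T ν hinv r hri n
  have hfin := rvEnt_le ν (itin T P n) hmm q hq0 (fun s _ => hqpos s) hq1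
  have hmono : ∫ y, - Real.log (q (itin T P n y)) ∂ν ≤
      ∫ y, (n * (M + 1) + ∑ k ∈ Finset.range n, r (T^[k] y)) ∂ν := by
    refine integral_mono_ae (rv_integrable ν _ hmm fun s => - Real.log (q s))
      ((integrable_const _).add i1) ?_
    filter_upwards [Measure.support_mem_ae (μ := ν)] with y hy
    have h1 := hlow y ((Measure.mem_support_iff_forall y).1 hy _ (dynBall_nhds T hT n y ε hε))
    rw [← Real.le_log_iff_exp_le (hqpos _)] at h1
    linarith
  rw [integral_add (integrable_const _) i1, i2] at hmono
  simp only [integral_const, probReal_univ, smul_eq_mul, one_mul] at hmono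
  have h5 := mul_le_mul_of_nonneg_left hrint hn0.le
  have h6 : (n : ℝ) = N + 1 := by rw [hn]; push_cast; ring
  rw [← h6]
  linarith

end dyn

/-- for an invariant weak Gibbs measure `ν` for `φ`,
`−∫ φ dν ≤ h(T,ν)`. -/
theorem weakGibbs_neg_integral_le_entropy
    {X : Type*} [MetricSpace X] [CompactSpace X] [Nonempty X]
    [MeasurableSpace X] [BorelSpace X]
    (T : X → X) (hT : Continuous T) (hTsurj : Function.Surjective T)
    (φ : X → ℝ) (hφ : Continuous φ)
    (ν : Measure X) [IsProbabilityMeasure ν] (hinv : Measure.map T ν = ν)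
    (hν : IsWeakGibbs T ν φ) :
    - ∫ x, φ x ∂ν ≤ metricEntropy T ν := by
  have hinv' : MeasurePreserving T ν ν := ⟨hT.measurable, hinv⟩
  obtain ⟨M, hM⟩ : ∃ M, ∀ x, |φ x| ≤ M := by
    obtain ⟨M, hM⟩ := isCompact_univ.exists_bound_of_continuousOn hφ.continuousOn
    exact ⟨M, fun x => hM x (mem_univ x)⟩
  have hM0 : 0 ≤ M := (abs_nonneg _).trans (hM (Classical.arbitrary X))
  set C := M + 1 + Real.log 2 + 1 with hC
  have hC0 : 0 ≤ C := by have := Real.log_nonneg one_le_two; linarith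
  have hmeas : ∀ {p : ℕ} (P : X → Fin p), (∀ i, MeasurableSet (P ⁻¹' {i})) → Measurable P :=
    fun P h => measurable_to_countable' h
  have hub : ∀ (p : ℕ) (P : {P : X → Fin p // ∀ i, MeasurableSet (P ⁻¹' {i})}),
      partEntropy T ν P.1 ≤ C := fun p P =>
    upper_bound T hT φ ν hinv' hν M hM P.1 (hmeas P.1 P.2)
  refine le_of_forall_pos_le_add fun δ hδ => ?_
  obtain ⟨p, P, hP, hle⟩ := lower_bound T hT φ hφ ν hinv' hν δ hδ
  have h1 : partEntropy T ν P ≤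
      ⨆ P : {P : X → Fin p // ∀ i, MeasurableSet (P ⁻¹' {i})}, partEntropy T ν P.1 :=
    le_ciSup (f := fun P : {P : X → Fin p // ∀ i, MeasurableSet (P ⁻¹' {i})} =>
      partEntropy T ν P.1) ⟨C, by rintro _ ⟨P, rfl⟩; exact hub p P⟩
      ⟨P, fun i => hP (measurableSet_singleton i)⟩
  have h2 : (⨆ P : {P : X → Fin p // ∀ i, MeasurableSet (P ⁻¹' {i})}, partEntropy T ν P.1) ≤
      metricEntropy T ν :=
    le_ciSup (f := fun p : ℕ => ⨆ P : {P : X → Fin p // ∀ i, MeasurableSet (P ⁻¹' {i})},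
      partEntropy T ν P.1) ⟨C, by
        rintro _ ⟨p, rfl⟩
        exact Real.iSup_le (hub p) hC0⟩ p
  linarith
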